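/- arXiv:2604.20234 — 6 statements merged into one kernel-verified Lean document; each statement's English description precedes it below -/
import Mathlib

section
/- Let t0 ∈ ℝ, let a, b > 0 and 0 < l1 < 1 < l2, and let v : [t0, ∞) → ℝ be a differentiable nonnegative function satisfying v'(t) ≤ −a·v(t)^{l1} − b·v(t)^{l2} for all t ≥ t0. Then v(t) = 0 for all t ≥ t0 + 1/(a(1−l1)) + 1/(b(l2−1)); in particular the settling-time bound 1/(a(1−l1)) + 1/(b(l2−1)) is independent of the initial value v(t0). -/
/-- Mean value inequality. -/
lemma mvt_aux (f f' : ℝ → ℝ) (C x y : ℝ) (hxy : x ≤ y)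
    (hf : ∀ t, x ≤ t → t ≤ y → HasDerivAt f (f' t) t)
    (hC : ∀ t, x ≤ t → t ≤ y → f' t ≤ C) : f y - f x ≤ C * (y - x) := by
  rcases hxy.eq_or_lt with rfl | h
  · simp
  obtain ⟨c, hc, hc'⟩ := exists_hasDerivAt_eq_slope f f' h
    (fun t ht => (hf t ht.1 ht.2).continuousAt.continuousWithinAt)
    (fun t ht => hf t ht.1.le ht.2.le)
  have h1 := hC c hc.1.le hc.2.le
  rw [hc', div_le_iff₀ (sub_pos.2 h)] at h1
  exact h1

/-- **Fixed-time stability, scalar Lyapunov form (Polyakov).**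
If a nonnegative differentiable function `v` satisfies
`v'(t) ≤ -a·v(t)^l1 - b·v(t)^l2` for all `t ≥ t0`, with `a, b > 0` and
`0 < l1 < 1 < l2`, then `v(t) = 0` for all
`t ≥ t0 + 1/(a(1-l1)) + 1/(b(l2-1))`, a bound independent of `v(t0)`. -/
theorem fixed_time_scalar_lyapunov
    (t0 a b l1 l2 : ℝ) (ha : 0 < a) (hb : 0 < b)
    (hl1 : 0 < l1) (hl1' : l1 < 1) (hl2 : 1 < l2)
    (v v' : ℝ → ℝ)
    (hv_nonneg : ∀ t, t0 ≤ t → 0 ≤ v t)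
    (hv_deriv : ∀ t, t0 ≤ t → HasDerivAt v (v' t) t)
    (hv_ineq : ∀ t, t0 ≤ t → v' t ≤ -a * (v t) ^ l1 - b * (v t) ^ l2) :
    ∀ t, t0 + 1 / (a * (1 - l1)) + 1 / (b * (l2 - 1)) ≤ t → v t = 0 := by
  intro T hT
  by_contra hne
  have hA : 0 < 1 / (a * (1 - l1)) := by
    have : 0 < 1 - l1 := by linarith
    positivity
  have hB : 0 < 1 / (b * (l2 - 1)) := by
    have : 0 < l2 - 1 := by linarith
    positivity
  have hTpos : 0 < v T := lt_of_le_of_ne (hv_nonneg T (by linarith)) (Ne.symm hne)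
  have hpos : ∀ t, t0 ≤ t → t ≤ T → 0 < v t := by
    intro t h1 h2
    have := mvt_aux v v' 0 t T h2 (fun s hs _ => hv_deriv s (h1.trans hs)) (by
      intro s hs _
      have h3 := hv_ineq s (h1.trans hs)
      have h4 := Real.rpow_nonneg (hv_nonneg s (h1.trans hs)) l1
      have h5 := Real.rpow_nonneg (hv_nonneg s (h1.trans hs)) l2
      nlinarith [mul_nonneg ha.le h4, mul_nonneg hb.le h5])
    linarith
  obtain ⟨T1, hT1⟩ : ∃ T1, T1 = t0 + 1 / (b * (l2 - 1)) := ⟨_, rfl⟩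
  have h01 : t0 ≤ T1 := by linarith
  have h1T : T1 ≤ T := by linarith
  -- first phase
  have hphase1 := mvt_aux (fun t => -(v t) ^ (1 - l2))
    (fun t => -(v' t * (1 - l2) * (v t) ^ (1 - l2 - 1))) (-(b * (l2 - 1))) t0 T1 h01
    (fun t ht ht' => ((hv_deriv t ht).rpow_const (Or.inl (hpos t ht (ht'.trans h1T)).ne')).neg)
    (by
      intro t ht ht'
      have hp := hpos t ht (ht'.trans h1T)
      have h3 := hv_ineq t ht
      have h4 := Real.rpow_pos_of_pos hp l1
      have h6 := Real.rpow_pos_of_pos hp (1 - l2 - 1)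
      have h7 : v t ^ l2 * v t ^ (1 - l2 - 1) = 1 := by
        rw [← Real.rpow_add hp]; ring_nf; simp
      have h8 : v' t ≤ -(b * v t ^ l2) := by nlinarith [mul_pos ha h4]
      have h9 := mul_le_mul_of_nonneg_right h8 h6.le
      have h10 : v' t * v t ^ (1 - l2 - 1) ≤ -b := by
        calc _ ≤ _ := h9
          _ = -b * (v t ^ l2 * v t ^ (1 - l2 - 1)) := by ring
          _ = -b := by rw [h7]; ring
      have := mul_le_mul_of_nonneg_left h10 (sub_pos.2 hl2).le
      linarith)
  have hB1 : -(b * (l2 - 1)) * (T1 - t0) = -1 := by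
    have : l2 - 1 ≠ 0 := (sub_pos.2 hl2).ne'
    rw [hT1]; field_simp; ring
  have hw0 := Real.rpow_pos_of_pos (hpos t0 le_rfl (h01.trans h1T)) (1 - l2)
  have hw1 : 1 < v T1 ^ (1 - l2) := by
    rw [hB1] at hphase1
    linarith
  have hv1 : v T1 < 1 := by
    by_contra hc
    have := Real.rpow_le_one_of_one_le_of_nonpos (not_lt.1 hc) (by linarith : 1 - l2 ≤ 0)
    linarith
  -- second phase
  have hphase2 := mvt_aux (fun t => (v t) ^ (1 - l1))
    (fun t => v' t * (1 - l1) * (v t) ^ (1 - l1 - 1)) (-(a * (1 - l1))) T1 T h1T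
    (fun t ht ht' => (hv_deriv t (h01.trans ht)).rpow_const
      (Or.inl (hpos t (h01.trans ht) ht').ne'))
    (by
      intro t ht ht'
      have hp := hpos t (h01.trans ht) ht'
      have h3 := hv_ineq t (h01.trans ht)
      have h4 := Real.rpow_pos_of_pos hp l2
      have h6 := Real.rpow_pos_of_pos hp (1 - l1 - 1)
      have h7 : v t ^ l1 * v t ^ (1 - l1 - 1) = 1 := by
        rw [← Real.rpow_add hp]; ring_nf; simp
      have h8 : v' t ≤ -(a * v t ^ l1) := by nlinarith [mul_pos hb h4]
      have h9 := mul_le_mul_of_nonneg_right h8 h6.le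
      have h10 : v' t * v t ^ (1 - l1 - 1) ≤ -a := by
        calc _ ≤ _ := h9
          _ = -a * (v t ^ l1 * v t ^ (1 - l1 - 1)) := by ring
          _ = -a := by rw [h7]; ring
      have := mul_le_mul_of_nonneg_left h10 (sub_pos.2 hl1').le
      linarith)
  have hA1 : 1 ≤ (a * (1 - l1)) * (T - T1) := by
    have h : 0 < a * (1 - l1) := mul_pos ha (sub_pos.2 hl1')
    have h2 : 1 / (a * (1 - l1)) ≤ T - T1 := by linarith
    rw [div_le_iff₀ h] at h2
    linarith
  have hu1 : v T1 ^ (1 - l1) < 1 :=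
    Real.rpow_lt_one (hpos T1 h01 h1T).le hv1 (sub_pos.2 hl1')
  have huT := Real.rpow_pos_of_pos hTpos (1 - l1)
  linarith
end

section
/- Let H be a real n×n matrix all of whose eigenvalues (as a matrix over ℂ) have strictly positive real part. Then there exists a symmetric positive definite matrix P ∈ ℝ^{n×n} such that the matrix P·H + Hᵀ·P is positive definite. -/
open scoped Matrix

section Helpers

open scoped Matrix.Norms.L2Operator

/-- If the spectrum lies in the open unit disc, some positive power is a strict contraction. -/
lemma lyap_pow_contract {n : ℕ} (C : Matrix (Fin (n + 1)) (Fin (n + 1)) ℂ)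
    (hC : ∀ μ ∈ spectrum ℂ C, ‖μ‖ < 1) : ∃ N : ℕ, ‖C ^ (N + 1)‖ < 1 := by
  have h1 : spectralRadius ℂ C < 1 := by
    have := spectrum.spectralRadius_lt_of_forall_lt C (r := 1) (fun z hz => by
      have := hC z hz
      exact_mod_cast this)
    simpa using this
  have h2 := spectrum.pow_nnnorm_pow_one_div_tendsto_nhds_spectralRadius C
  have h3 := (h2.eventually (gt_mem_nhds h1)).and (Filter.eventually_ge_atTop 1)
  obtain ⟨N, hN, hN1⟩ := h3.exists
  refine ⟨N - 1, ?_⟩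
  rw [Nat.sub_add_cancel hN1]
  by_contra hcon
  push Not at hcon
  have h4 : (1 : ENNReal) ≤ (‖C ^ N‖₊ : ENNReal) := by
    have : (1 : NNReal) ≤ ‖C ^ N‖₊ := by exact_mod_cast hcon
    exact_mod_cast this
  have h5 : (1 : ENNReal) ≤ (‖C ^ N‖₊ : ENNReal) ^ (1 / N : ℝ) :=
    ENNReal.one_le_rpow h4 (by positivity)
  exact absurd hN (not_lt.mpr h5)

lemma lyap_real_contract {n : ℕ} (A : Matrix (Fin n) (Fin n) ℝ)
    (hA : ‖Complex.ofRealHom.mapMatrix A‖ < 1) (x : Fin n → ℝ) (hx : x ≠ 0) :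
    (A *ᵥ x) ⬝ᵥ (A *ᵥ x) < x ⬝ᵥ x := by
  have key : ∀ y : Fin n → ℝ,
      ‖WithLp.toLp 2 (fun i => (y i : ℂ))‖ ^ 2 = y ⬝ᵥ y := by
    intro y
    rw [EuclideanSpace.norm_sq_eq]
    simp [dotProduct, pow_two]
  have h := Matrix.l2_opNorm_mulVec (Complex.ofRealHom.mapMatrix A)
    (WithLp.toLp 2 (fun i => (x i : ℂ)))
  have e : (EuclideanSpace.equiv (Fin n) ℂ).symm
      ((Complex.ofRealHom.mapMatrix A) *ᵥ (WithLp.toLp 2 (fun i => (x i : ℂ))).ofLp)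
      = WithLp.toLp 2 (fun i => ((A *ᵥ x) i : ℂ)) := by
    ext i
    simp [Matrix.mulVec, dotProduct]
  rw [e] at h
  rw [← key, ← key]
  have hpos : 0 < ‖WithLp.toLp 2 (fun i => (x i : ℂ))‖ := by
    rw [norm_pos_iff]
    intro h0
    apply hx
    ext i
    have := congrArg (fun v : EuclideanSpace ℂ (Fin n) => v i) h0
    simpa using this
  have : ‖WithLp.toLp 2 (fun i => ((A *ᵥ x) i : ℂ))‖ < ‖WithLp.toLp 2 (fun i => (x i : ℂ))‖ := by
    nlinarith
  exact pow_lt_pow_left₀ this (norm_nonneg _) (by norm_num)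

/-- The Cayley transform maps the right half-plane spectrum into the unit disc. -/
lemma lyap_cayley {n : ℕ} (H K : Matrix (Fin n) (Fin n) ℂ)
    (hH : ∀ μ ∈ spectrum ℂ H, 0 < μ.re) (hK : K * (H + 1) = 1) :
    ∀ μ ∈ spectrum ℂ ((H - 1) * K), ‖μ‖ < 1 := by
  intro μ hμ
  have hK' : (H + 1) * K = 1 := mul_eq_one_comm.mp hK
  have hKu : IsUnit K := ⟨⟨K, H + 1, hK, hK'⟩, rfl⟩
  have e : algebraMap ℂ (Matrix (Fin n) (Fin n) ℂ) μ - (H - 1) * K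
      = (μ • (H + 1) - (H - 1)) * K := by
    rw [sub_mul (μ • (H + 1)), Matrix.smul_mul, hK', Algebra.algebraMap_eq_smul_one]
  have hnu : ¬ IsUnit (μ • (H + 1) - (H - 1)) := by
    intro hu
    apply hμ
    change IsUnit (algebraMap ℂ (Matrix (Fin n) (Fin n) ℂ) μ - (H - 1) * K)
    rw [e]
    exact hu.mul hKu
  have hμ1 : 1 - μ ≠ 0 := by
    intro h0
    have h1 : μ = 1 := (sub_eq_zero.mp h0).symm
    apply hnu
    have : μ • (H + 1) - (H - 1) = algebraMap ℂ (Matrix (Fin n) (Fin n) ℂ) 2 := by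
      rw [h1, Algebra.algebraMap_eq_smul_one, two_smul]; simp
    rw [this]
    exact (IsUnit.mk0 (2 : ℂ) (by norm_num)).map _
  have hmem : (1 + μ) / (1 - μ) ∈ spectrum ℂ H := by
    intro hu
    apply hnu
    have : μ • (H + 1) - (H - 1) = algebraMap ℂ (Matrix (Fin n) (Fin n) ℂ) (1 - μ) *
        (algebraMap ℂ (Matrix (Fin n) (Fin n) ℂ) ((1 + μ) / (1 - μ)) - H) := by
      rw [mul_sub, ← map_mul, mul_div_cancel₀ _ hμ1, Algebra.algebraMap_eq_smul_one,
        Algebra.algebraMap_eq_smul_one, Matrix.smul_mul, one_mul]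
      module
    rw [this]
    exact ((IsUnit.mk0 _ hμ1).map _).mul hu
  have hre := hH _ hmem
  have hns : 0 < Complex.normSq (1 - μ) := Complex.normSq_pos.mpr hμ1
  rw [Complex.div_re, ← add_div, div_pos_iff_of_pos_right hns] at hre
  have h2 : ‖μ‖ ^ 2 < 1 := by
    rw [← Complex.normSq_eq_norm_sq, Complex.normSq_apply]
    simp at hre
    nlinarith
  nlinarith [norm_nonneg μ]

end Helpers

/-- **Lyapunov matrix existence for anti-Hurwitz matrices.**
If every eigenvalue of the real matrix `H` (viewed as a complex matrix) has strictly
positive real part, then there exists a symmetric positive definite `P` with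
`P·H + Hᵀ·P` positive definite. -/
theorem lyapunov_exists_of_antiHurwitz (n : ℕ) (H : Matrix (Fin n) (Fin n) ℝ)
    (hH : ∀ μ ∈ spectrum ℂ (H.map (fun x : ℝ => (x : ℂ))), 0 < μ.re) :
    ∃ P : Matrix (Fin n) (Fin n) ℝ, P.PosDef ∧ (P * H + Hᵀ * P).PosDef := by
  cases n with
  | zero =>
    refine ⟨1, Matrix.PosDef.one, ?_⟩
    have : (1 * H + Hᵀ * 1) = 1 := Subsingleton.elim _ _
    rw [this]
    exact Matrix.PosDef.one
  | succ m =>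
    have hH' : ∀ μ ∈ spectrum ℂ (Complex.ofRealHom.mapMatrix H), 0 < μ.re := hH
    have hu : IsUnit (H + 1) := by
      by_contra hnu
      have hmem : (-1 : ℂ) ∈ spectrum ℂ (Complex.ofRealHom.mapMatrix H) := by
        intro hu
        apply hnu
        have e : algebraMap ℂ (Matrix (Fin (m + 1)) (Fin (m + 1)) ℂ) (-1)
            - Complex.ofRealHom.mapMatrix H = - Complex.ofRealHom.mapMatrix (H + 1) := by
          rw [map_add, map_one, map_neg, map_one]; abel
        change IsUnit (algebraMap ℂ (Matrix (Fin (m + 1)) (Fin (m + 1)) ℂ) (-1)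
            - Complex.ofRealHom.mapMatrix H) at hu
        rw [e, IsUnit.neg_iff, Matrix.isUnit_iff_isUnit_det, ← RingHom.map_det,
          isUnit_map_iff] at hu
        exact (Matrix.isUnit_iff_isUnit_det _).mpr hu
      have := hH' _ hmem
      norm_num at this
    obtain ⟨U, hU⟩ := hu
    set K : Matrix (Fin (m + 1)) (Fin (m + 1)) ℝ := ↑U⁻¹ with hKdef
    have hK : K * (H + 1) = 1 := by rw [← hU]; exact U.inv_mul
    set C := (H - 1) * K with hC
    have hCH : C * (H + 1) = H - 1 := by rw [hC, mul_assoc, hK, mul_one]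
    obtain ⟨N, hN⟩ := lyap_pow_contract (Complex.ofRealHom.mapMatrix C) (by
      have := lyap_cayley (Complex.ofRealHom.mapMatrix H) (Complex.ofRealHom.mapMatrix K) hH'
        (by rw [← map_one Complex.ofRealHom.mapMatrix, ← map_add, ← map_mul, hK])
      rwa [← map_one Complex.ofRealHom.mapMatrix, ← map_sub, ← map_mul] at this)
    rw [← map_pow] at hN
    clear_value C
    have hcon := lyap_real_contract _ hN
    let P : Matrix (Fin (m + 1)) (Fin (m + 1)) ℝ :=
      ∑ k ∈ Finset.range (N + 1), (C ^ k)ᵀ * C ^ k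
    have hP : P.PosDef := by
      simp only [P]
      rw [Finset.sum_range_succ']
      simp only [pow_zero, Matrix.transpose_one, mul_one]
      refine Matrix.PosDef.posSemidef_add ?_ Matrix.PosDef.one
      refine Matrix.posSemidef_sum _ fun k _ => ?_
      have := Matrix.posSemidef_conjTranspose_mul_self (C ^ (k + 1))
      rwa [Matrix.conjTranspose_eq_transpose_of_trivial] at this
    have hD : P - Cᵀ * P * C = 1 - (C ^ (N + 1))ᵀ * C ^ (N + 1) := by
      have : Cᵀ * P * C = ∑ k ∈ Finset.range (N + 1), (C ^ (k + 1))ᵀ * C ^ (k + 1) := by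
        simp only [P]
        rw [Finset.mul_sum, Finset.sum_mul]
        refine Finset.sum_congr rfl fun k _ => ?_
        rw [pow_succ, Matrix.transpose_mul (C ^ k) C]
        simp only [mul_assoc]
      rw [this, ← Finset.sum_sub_distrib,
        Finset.sum_range_sub' (fun k => (C ^ k)ᵀ * C ^ k)]
      simp
    have hsymm : Pᵀ = P := by
      have := hP.1
      rwa [Matrix.IsHermitian, Matrix.conjTranspose_eq_transpose_of_trivial] at this
    have hDpos : (1 - (C ^ (N + 1))ᵀ * C ^ (N + 1)).PosDef := by
      refine Matrix.PosDef.of_dotProduct_mulVec_pos ?_ ?_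
      · rw [Matrix.IsHermitian, Matrix.conjTranspose_eq_transpose_of_trivial]
        simp [Matrix.transpose_mul, Matrix.transpose_sub]
      · intro x hx
        have := hcon x hx
        rw [star_trivial, Matrix.sub_mulVec, Matrix.one_mulVec, dotProduct_sub,
          ← Matrix.mulVec_mulVec, Matrix.dotProduct_mulVec x, Matrix.vecMul_transpose]
        linarith
    refine ⟨P, hP, ?_⟩
    have hfin : P * H + Hᵀ * P = (1 / 2 : ℝ) • ((H + 1)ᴴ * (P - Cᵀ * P * C) * (H + 1)) := by
      have e1 : (H + 1)ᴴ * (P - Cᵀ * P * C) * (H + 1)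
          = (H + 1)ᵀ * P * (H + 1) - (C * (H + 1))ᵀ * P * (C * (H + 1)) := by
        rw [Matrix.conjTranspose_eq_transpose_of_trivial, Matrix.transpose_mul C (H + 1)]
        noncomm_ring
      rw [e1, hCH, Matrix.transpose_add, Matrix.transpose_sub, Matrix.transpose_one]
      have e2 : (Hᵀ + 1) * P * (H + 1) - (Hᵀ - 1) * P * (H - 1)
          = (2 : ℝ) • (P * H + Hᵀ * P) := by
        rw [two_smul]
        noncomm_ring
      rw [e2, smul_smul]
      norm_num
    rw [hfin, hD]
    refine Matrix.PosDef.smul ?_ (by norm_num)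
    refine hDpos.conjTranspose_mul_mul_same ?_
    exact Matrix.mulVec_injective_of_isUnit ⟨U, hU⟩
end

section
/- Let k > 0, γ > 0, T > 0, let A : ℝ → ℝ^{m×m} be continuous with A(s) symmetric positive semidefinite for every s ≥ 0, and define M(t) = ∫_0^t e^{k(s−t)} A(s) ds. Suppose the interval-excitation condition ∫_0^T A(s) ds ⪰ γ·I_m holds (i.e., ∫_0^T A(s) ds − γ I_m is positive semidefinite). Then for every t ≥ T, M(t) ⪰ γ·e^{−kt}·I_m; in particular, for every q ≥ 1 and every t ∈ [T, qT], the smallest eigenvalue of M(t) satisfies λ_min(M(t)) ≥ γ·e^{−kqT} > 0. -/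
open scoped Matrix

lemma quad_form_integral (m : ℕ) (a b : ℝ) (w : ℝ → ℝ) (hw : Continuous w)
    (A : ℝ → Matrix (Fin m) (Fin m) ℝ) (hAc : Continuous A)
    (B : Matrix (Fin m) (Fin m) ℝ)
    (hB : ∀ i j, B i j = ∫ s in a..b, w s * A s i j) (x : Fin m → ℝ) :
    x ⬝ᵥ (B *ᵥ x) = ∫ s in a..b, w s * (x ⬝ᵥ (A s *ᵥ x)) := by
  have hc : ∀ i j, Continuous fun s => A s i j := fun i j => hAc.matrix_elem i j
  simp only [dotProduct, Matrix.mulVec, Finset.mul_sum]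
  rw [intervalIntegral.integral_finsetSum]
  · refine Finset.sum_congr rfl fun i _ => ?_
    rw [intervalIntegral.integral_finsetSum]
    · refine Finset.sum_congr rfl fun j _ => ?_
      rw [hB, ← intervalIntegral.integral_mul_const, ← intervalIntegral.integral_const_mul]
      congr 1
      ext s
      ring
    · intro j _
      have := hc i j
      exact Continuous.intervalIntegrable (by fun_prop) _ _
  · intro i _
    exact Continuous.intervalIntegrable
      (continuous_finsetSum _ fun j _ => by have := hc i j; fun_prop) _ _

/-- **Interval excitation gives a positive lower bound on the filtered information matrix.**
Let `A(s) ⪰ 0` be continuous, `M(t) = ∫₀ᵗ e^{k(s−t)} A(s) ds` (entrywise), and suppose the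
interval-excitation condition `∫₀ᵀ A(s) ds ⪰ γ·I` holds. Then `M(t) ⪰ γ e^{−kt} I` for all
`t ≥ T`; in particular, for every `q ≥ 1` and `t ∈ [T, qT]`, every eigenvalue of the
(Hermitian) matrix `M(t)` is at least `γ e^{−kqT} > 0`. -/
theorem interval_excitation_lower_bound (m : ℕ) (k γ T : ℝ)
    (hk : 0 < k) (hγ : 0 < γ) (hT : 0 < T)
    (A : ℝ → Matrix (Fin m) (Fin m) ℝ) (hAc : Continuous A)
    (hA : ∀ s : ℝ, 0 ≤ s → (A s).PosSemidef)
    (M : ℝ → Matrix (Fin m) (Fin m) ℝ)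
    (hM : ∀ (t : ℝ) (i j : Fin m),
      M t i j = ∫ s in (0:ℝ)..t, Real.exp (k * (s - t)) * A s i j)
    (IA : Matrix (Fin m) (Fin m) ℝ)
    (hIA : ∀ i j, IA i j = ∫ s in (0:ℝ)..T, A s i j)
    (hIE : (IA - γ • (1 : Matrix (Fin m) (Fin m) ℝ)).PosSemidef) :
    (∀ t : ℝ, T ≤ t →
      (M t - (γ * Real.exp (-k * t)) • (1 : Matrix (Fin m) (Fin m) ℝ)).PosSemidef) ∧
    (∀ q : ℝ, 1 ≤ q → ∀ t ∈ Set.Icc T (q * T),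
      (∀ (hHerm : (M t).IsHermitian) (i : Fin m),
        γ * Real.exp (-(k * q * T)) ≤ hHerm.eigenvalues i) ∧
      0 < γ * Real.exp (-(k * q * T))) := by
  have hcq : ∀ x : Fin m → ℝ, Continuous fun s => x ⬝ᵥ (A s *ᵥ x) := fun x =>
    Continuous.dotProduct continuous_const (hAc.matrix_mulVec continuous_const)
  have hq0 : ∀ (x : Fin m → ℝ) (s : ℝ), 0 ≤ s → 0 ≤ x ⬝ᵥ (A s *ᵥ x) := fun x s hs => by
    simpa using (hA s hs).dotProduct_mulVec_nonneg x
  have key : ∀ t : ℝ, T ≤ t → ∀ x : Fin m → ℝ,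
      γ * Real.exp (-k * t) * (x ⬝ᵥ x) ≤ x ⬝ᵥ (M t *ᵥ x) := by
    intro t ht x
    have h1 := quad_form_integral m 0 t (fun s => Real.exp (k * (s - t))) (by fun_prop) A hAc
      (M t) (hM t) x
    have h2 := quad_form_integral m 0 T (fun _ => 1) (by fun_prop) A hAc
      IA (by simpa using hIA) x
    have h3 : γ * (x ⬝ᵥ x) ≤ x ⬝ᵥ (IA *ᵥ x) := by
      have := hIE.dotProduct_mulVec_nonneg x
      simp [Matrix.sub_mulVec, Matrix.smul_mulVec, dotProduct_sub, dotProduct_smul] at this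
      linarith
    simp only [one_mul] at h2
    have hcx := hcq x
    have hcf : Continuous fun s => Real.exp (k * (s - t)) * (x ⬝ᵥ (A s *ᵥ x)) := by fun_prop
    have h4 : ∫ s in (0:ℝ)..T, Real.exp (k * (s - t)) * (x ⬝ᵥ (A s *ᵥ x)) ≤
        ∫ s in (0:ℝ)..t, Real.exp (k * (s - t)) * (x ⬝ᵥ (A s *ᵥ x)) := by
      rw [← intervalIntegral.integral_add_adjacent_intervals (hcf.intervalIntegrable 0 T)
        (hcf.intervalIntegrable T t)]
      have : 0 ≤ ∫ s in T..t, Real.exp (k * (s - t)) * (x ⬝ᵥ (A s *ᵥ x)) :=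
        intervalIntegral.integral_nonneg ht fun s hs =>
          mul_nonneg (Real.exp_pos _).le (hq0 x s (hT.le.trans hs.1))
      linarith
    have h5 : ∫ s in (0:ℝ)..T, Real.exp (-k * t) * (x ⬝ᵥ (A s *ᵥ x)) ≤
        ∫ s in (0:ℝ)..T, Real.exp (k * (s - t)) * (x ⬝ᵥ (A s *ᵥ x)) := by
      refine intervalIntegral.integral_mono_on hT.le
        (Continuous.intervalIntegrable (by fun_prop) _ _) (hcf.intervalIntegrable _ _) ?_
      intro s hs
      refine mul_le_mul_of_nonneg_right (Real.exp_le_exp.2 ?_) (hq0 x s hs.1)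
      nlinarith [mul_nonneg hk.le hs.1]
    rw [intervalIntegral.integral_const_mul, ← h2] at h5
    have h6 := mul_le_mul_of_nonneg_left h3 (Real.exp_pos (-k * t)).le
    rw [h1]
    linarith
  refine ⟨fun t ht => ?_, fun q hq t ht => ⟨fun hHerm i => ?_, by positivity⟩⟩
  · refine Matrix.PosSemidef.of_dotProduct_mulVec_nonneg ?_ fun x => ?_
    · ext i j
      have h : M t j i = M t i j := by
        rw [hM, hM]
        refine intervalIntegral.integral_congr fun s hs => ?_
        rw [Set.uIcc_of_le (hT.le.trans ht)] at hs
        have := (hA s hs.1).isHermitian.apply i j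
        simp only [star_trivial] at this
        simp only [this]
      simp [Matrix.conjTranspose_apply, h, Matrix.one_apply, eq_comm]
    · have := key t ht x
      simp [Matrix.sub_mulVec, Matrix.smul_mulVec, dotProduct_sub, dotProduct_smul]
      simpa using this
  · have h1 := key t ht.1 (hHerm.eigenvectorBasis i)
    have h2 : (hHerm.eigenvectorBasis i : Fin m → ℝ) ⬝ᵥ (hHerm.eigenvectorBasis i) = 1 := by
      have := hHerm.eigenvectorBasis.orthonormal.1 i
      have h := real_inner_self_eq_norm_sq (hHerm.eigenvectorBasis i)
      rw [this, EuclideanSpace.inner_eq_star_dotProduct, star_trivial, one_pow] at h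
      exact h
    rw [hHerm.mulVec_eigenvectorBasis, dotProduct_smul, h2] at h1
    simp only [mul_one, smul_eq_mul] at h1
    refine le_trans (mul_le_mul_of_nonneg_left (Real.exp_le_exp.2 ?_) hγ.le) h1
    nlinarith [mul_le_mul_of_nonneg_left ht.2 hk.le]
end

section
/- Let m ≥ 1, μ > 0, α ∈ (0,1), let M ∈ ℝ^{m×m} be symmetric with M ⪰ μ·I_m (i.e., M − μI_m positive semidefinite), and let θ ∈ ℝ^m. Then θᵀ Mᵀ ⌈Mθ⌋^{1−α} = Σ_{i=1}^m |(Mθ)_i|^{2−α} ≥ μ^{2−α}·‖θ‖₂^{2−α}, and θᵀ Mᵀ ⌈Mθ⌋^{1+α} = Σ_{i=1}^m |(Mθ)_i|^{2+α} ≥ m^{−α/2}·μ^{2+α}·‖θ‖₂^{2+α}, where ‖·‖₂ is the Euclidean norm. -/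
open scoped Matrix
open Finset

/-- The componentwise signed power `⌈v⌋^β`, with `i`-th component `|v_i|^β · sgn(v_i)`. -/
noncomputable def signedPow {d : ℕ} (β : ℝ) (v : Fin d → ℝ) : Fin d → ℝ :=
  fun i => |v i| ^ β * Real.sign (v i)

theorem aux_sqrt_rpow (x β : ℝ) (hx : 0 ≤ x) : Real.sqrt x ^ β = x ^ (β / 2) := by
  rw [Real.sqrt_eq_rpow, ← Real.rpow_mul hx]
  congr 1; ring

theorem aux_abs_rpow (x β : ℝ) : |x| ^ β = (x ^ 2) ^ (β / 2) := by
  rw [← Real.sqrt_sq_eq_abs, aux_sqrt_rpow _ _ (sq_nonneg x)]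

theorem aux_subadd {ι : Type*} (s : Finset ι) (f : ι → ℝ) (hf : ∀ i, 0 ≤ f i) (p : ℝ)
    (hp : 0 < p) (hp1 : p ≤ 1) : (∑ i ∈ s, f i) ^ p ≤ ∑ i ∈ s, f i ^ p := by
  classical
  induction s using Finset.induction_on with
  | empty => simp [Real.zero_rpow hp.ne']
  | insert a s ha ih =>
    rw [Finset.sum_insert ha, Finset.sum_insert ha]
    have := Real.rpow_add_le_add_rpow (hf a) (Finset.sum_nonneg fun i _ => hf i : 0 ≤ ∑ i ∈ s, f i)
      hp.le hp1
    linarith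

theorem aux_pair {m : ℕ} (M : Matrix (Fin m) (Fin m) ℝ) (θ : Fin m → ℝ) (β : ℝ) (hβ : 0 < β) :
    θ ⬝ᵥ (Mᵀ *ᵥ signedPow β (M *ᵥ θ)) = ∑ i, |(M *ᵥ θ) i| ^ (β + 1) := by
  rw [Matrix.dotProduct_mulVec, Matrix.vecMul_transpose]
  unfold dotProduct signedPow
  refine Finset.sum_congr rfl fun i _ => ?_
  generalize (M *ᵥ θ) i = x
  rw [Real.rpow_add_one' (abs_nonneg x) (by linarith)]
  rcases lt_trichotomy x 0 with h | h | h
  · rw [Real.sign_of_neg h, abs_of_neg h]; ring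
  · subst h; simp
  · rw [Real.sign_of_pos h, abs_of_pos h]; ring

theorem aux_norm {m : ℕ} (μ : ℝ) (hμ : 0 < μ) (M : Matrix (Fin m) (Fin m) ℝ)
    (hM : (M - μ • (1 : Matrix (Fin m) (Fin m) ℝ)).PosSemidef) (θ : Fin m → ℝ) :
    μ ^ 2 * ∑ i, θ i ^ 2 ≤ ∑ i, (M *ᵥ θ) i ^ 2 := by
  have h1 := hM.dotProduct_mulVec_nonneg θ
  rw [Matrix.sub_mulVec, Matrix.smul_mulVec, Matrix.one_mulVec, dotProduct_sub,
    dotProduct_smul] at h1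
  simp only [dotProduct, star_trivial, smul_eq_mul] at h1
  have h2 : ∑ i, ((M *ᵥ θ) i - μ * θ i) ^ 2 = ∑ i, (M *ᵥ θ) i ^ 2
      - 2 * μ * ∑ i, θ i * (M *ᵥ θ) i + μ ^ 2 * ∑ i, θ i ^ 2 := by
    simp only [Finset.mul_sum, ← Finset.sum_sub_distrib, ← Finset.sum_add_distrib]
    exact Finset.sum_congr rfl fun i _ => by ring
  have h3 : 0 ≤ ∑ i, ((M *ᵥ θ) i - μ * θ i) ^ 2 := Finset.sum_nonneg fun i _ => sq_nonneg _
  have h4 : ∑ i, θ i * θ i = ∑ i, θ i ^ 2 := Finset.sum_congr rfl fun i _ => by ring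
  rw [h4] at h1
  nlinarith [mul_nonneg hμ.le h1]

theorem aux_lower {m : ℕ} (μ : ℝ) (hμ : 0 < μ) (M : Matrix (Fin m) (Fin m) ℝ)
    (hM : (M - μ • (1 : Matrix (Fin m) (Fin m) ℝ)).PosSemidef) (θ : Fin m → ℝ)
    (β : ℝ) (hβ : 0 < β) :
    μ ^ β * Real.sqrt (∑ i, θ i ^ 2) ^ β ≤ (∑ i, (M *ᵥ θ) i ^ 2) ^ (β / 2) := by
  have hS : 0 ≤ ∑ i, θ i ^ 2 := Finset.sum_nonneg fun i _ => sq_nonneg _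
  have h : μ ^ β = (μ ^ 2) ^ (β / 2) := by rw [← aux_abs_rpow, abs_of_pos hμ]
  rw [aux_sqrt_rpow _ _ hS, h, ← Real.mul_rpow (sq_nonneg μ) hS]
  exact Real.rpow_le_rpow (by positivity) (aux_norm μ hμ M hM θ) (by positivity)

/-- **Coercivity of the signed-power pairing.**
If `M` is symmetric with `M ⪰ μI`, `μ > 0`, `α ∈ (0,1)`, then
`θᵀMᵀ⌈Mθ⌋^{1−α} = Σ_i |(Mθ)_i|^{2−α} ≥ μ^{2−α}‖θ‖₂^{2−α}` and
`θᵀMᵀ⌈Mθ⌋^{1+α} = Σ_i |(Mθ)_i|^{2+α} ≥ m^{−α/2} μ^{2+α}‖θ‖₂^{2+α}`. -/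
theorem signed_power_coercivity (m : ℕ) (hm : 1 ≤ m) (μ α : ℝ)
    (hμ : 0 < μ) (hα : α ∈ Set.Ioo (0:ℝ) 1)
    (M : Matrix (Fin m) (Fin m) ℝ) (hMsym : M.IsSymm)
    (hM : (M - μ • (1 : Matrix (Fin m) (Fin m) ℝ)).PosSemidef)
    (θ : Fin m → ℝ) :
    (θ ⬝ᵥ (Mᵀ *ᵥ signedPow (1 - α) (M *ᵥ θ)) = ∑ i, |(M *ᵥ θ) i| ^ (2 - α) ∧
      μ ^ (2 - α) * Real.sqrt (∑ i, θ i ^ 2) ^ (2 - α) ≤ ∑ i, |(M *ᵥ θ) i| ^ (2 - α)) ∧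
    (θ ⬝ᵥ (Mᵀ *ᵥ signedPow (1 + α) (M *ᵥ θ)) = ∑ i, |(M *ᵥ θ) i| ^ (2 + α) ∧
      (m : ℝ) ^ (-α / 2) * μ ^ (2 + α) * Real.sqrt (∑ i, θ i ^ 2) ^ (2 + α)
        ≤ ∑ i, |(M *ᵥ θ) i| ^ (2 + α)) := by
  obtain ⟨h0, h1⟩ := hα
  refine ⟨⟨?_, ?_⟩, ?_, ?_⟩
  · rw [aux_pair M θ (1 - α) (by linarith)]
    ring_nf
  · refine (aux_lower μ hμ M hM θ (2 - α) (by linarith)).trans ?_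
    simp only [aux_abs_rpow]
    exact aux_subadd _ _ (fun i => sq_nonneg _) _ (by linarith) (by linarith)
  · rw [aux_pair M θ (1 + α) (by linarith)]
    ring_nf
  · have hl := aux_lower μ hμ M hM θ (2 + α) (by linarith)
    have hp := Real.rpow_sum_le_const_mul_sum_rpow_of_nonneg (s := Finset.univ)
      (f := fun i => (M *ᵥ θ) i ^ 2) (p := (2 + α) / 2) (by linarith) (fun i _ => sq_nonneg _)
    simp only [aux_abs_rpow]
    have hm0 : (0 : ℝ) < m := by exact_mod_cast hm
    have h3 := hl.trans hp
    rw [Finset.card_univ, Fintype.card_fin] at h3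
    rw [mul_assoc]
    refine (mul_le_mul_of_nonneg_left h3 (Real.rpow_nonneg hm0.le _)).trans (le_of_eq ?_)
    rw [← mul_assoc, ← Real.rpow_add hm0]
    have : -α / 2 + ((2 + α) / 2 - 1) = 0 := by ring
    rw [this, Real.rpow_zero, one_mul]
end

section
/- Let m ≥ 1, κ, Γ > 0, α ∈ (0,1), μ > 0, t₁ ≥ 0. Let N : ℝ → ℝ^{n×m} and M : ℝ → ℝ^{m×m} be continuous with M(t) symmetric positive semidefinite for all t ≥ 0 and M(t) ⪰ μ·I_m for all t ≥ t₁. Let θ : ℝ → ℝ^m be differentiable and satisfy θ'(t) = −κ·N(t)ᵀ(⌈N(t)θ(t)⌋^{1−α} + ⌈N(t)θ(t)⌋^{1+α}) − Γ·M(t)ᵀ(⌈M(t)θ(t)⌋^{1−α} + ⌈M(t)θ(t)⌋^{1+α}). Then the function V(t) = (1/2)‖θ(t)‖₂² satisfies, for every t ≥ t₁, V'(t) ≤ −2^{(2−α)/2}·Γ·μ^{2−α}·V(t)^{(2−α)/2} − 2^{(2+α)/2}·m^{−α/2}·Γ·μ^{2+α}·V(t)^{(2+α)/2}. -/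
open scoped Matrix
open Finset

lemma dot_signedPow {d : ℕ} (β : ℝ) (hβ : 0 < β) (v : Fin d → ℝ) :
    v ⬝ᵥ signedPow β v = ∑ i, (v i ^ 2) ^ ((1 + β) / 2) := by
  unfold dotProduct signedPow
  refine Finset.sum_congr rfl fun i _ => ?_
  have h1 : v i * Real.sign (v i) = |v i| := by
    rcases lt_trichotomy (v i) 0 with h | h | h
    · rw [Real.sign_of_neg h, abs_of_neg h]; ring
    · simp [h]
    · rw [Real.sign_of_pos h, abs_of_pos h]; ring
  rw [← sq_abs, ← Real.rpow_natCast, ← Real.rpow_mul (abs_nonneg _)]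
  have h2 : ((2 : ℕ) : ℝ) * ((1 + β) / 2) = β + 1 := by push_cast; ring
  rw [h2, Real.rpow_add_one' (abs_nonneg _) (by linarith), ← h1]
  ring_nf

lemma rpow_sum_le_sum_rpow' {ι : Type*} (s : Finset ι) (f : ι → ℝ) (hf : ∀ i, 0 ≤ f i) {p : ℝ}
    (hp : 0 < p) (hp1 : p ≤ 1) : (∑ i ∈ s, f i) ^ p ≤ ∑ i ∈ s, f i ^ p := by
  classical
  induction s using Finset.induction_on with
  | empty => simp [Real.zero_rpow hp.ne']
  | insert a s ha ih =>
    rw [Finset.sum_insert ha, Finset.sum_insert ha]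
    have := Real.rpow_add_le_add_rpow (hf a) (Finset.sum_nonneg fun i (_ : i ∈ s) => hf i) hp.le hp1
    linarith

lemma norm_lower {m : ℕ} (A : Matrix (Fin m) (Fin m) ℝ) (μ : ℝ) (hμ : 0 < μ)
    (hA : (A - μ • (1 : Matrix (Fin m) (Fin m) ℝ)).PosSemidef) (x : Fin m → ℝ) :
    μ ^ 2 * ∑ i, x i ^ 2 ≤ ∑ i, (A *ᵥ x) i ^ 2 := by
  have h := hA.dotProduct_mulVec_nonneg x
  rw [Matrix.sub_mulVec, Matrix.smul_mulVec, Matrix.one_mulVec] at h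
  simp only [star_trivial, dotProduct, Pi.sub_apply, Pi.smul_apply, smul_eq_mul] at h
  have h2 : ∑ i, (A *ᵥ x) i ^ 2 = ∑ i, ((A *ᵥ x) i - μ * x i) ^ 2
      + 2 * μ * ∑ i, x i * ((A *ᵥ x) i - μ * x i) + μ ^ 2 * ∑ i, x i ^ 2 := by
    simp only [Finset.mul_sum, ← Finset.sum_add_distrib]
    exact Finset.sum_congr rfl fun i _ => by ring
  have h3 : 0 ≤ ∑ i, ((A *ᵥ x) i - μ * x i) ^ 2 := Finset.sum_nonneg fun i _ => sq_nonneg _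
  have h4 := mul_nonneg (by positivity : 0 ≤ 2 * μ) h
  linarith

lemma pow_conv (μ T p : ℝ) (hμ : 0 < μ) (hT : 0 ≤ T) :
    (2:ℝ) ^ (p / 2) * μ ^ p * ((1 / 2) * T) ^ (p / 2) = (μ ^ 2 * T) ^ (p / 2) := by
  rw [Real.mul_rpow (by positivity) hT, Real.mul_rpow (by positivity) hT, ← Real.rpow_natCast,
    ← Real.rpow_mul hμ.le, Real.div_rpow (by norm_num) (by norm_num), Real.one_rpow]
  have : ((2 : ℕ) : ℝ) * (p / 2) = p := by push_cast; ring
  rw [this]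
  have : (2:ℝ) ^ (p / 2) ≠ 0 := by positivity
  field_simp

/-- **Fixed-time Lyapunov differential inequality for the parameter-error dynamics.**
Under the disturbance-free fixed-time update law, with `M(t) ⪰ μI` for `t ≥ t₁`,
the function `V(t) = ½‖θ(t)‖₂²` satisfies, for `t ≥ t₁`,
`V' ≤ −2^{(2−α)/2} Γ μ^{2−α} V^{(2−α)/2} − 2^{(2+α)/2} m^{−α/2} Γ μ^{2+α} V^{(2+α)/2}`. -/
theorem fxt_lyapunov_inequality (n m : ℕ) (hm : 1 ≤ m) (κ Γ α μ t₁ : ℝ)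
    (hκ : 0 < κ) (hΓ : 0 < Γ) (hα : α ∈ Set.Ioo (0:ℝ) 1) (hμ : 0 < μ) (ht₁ : 0 ≤ t₁)
    (N : ℝ → Matrix (Fin n) (Fin m) ℝ) (M : ℝ → Matrix (Fin m) (Fin m) ℝ)
    (hNc : Continuous N) (hMc : Continuous M)
    (hMpsd : ∀ t : ℝ, 0 ≤ t → (M t).PosSemidef)
    (hMμ : ∀ t : ℝ, t₁ ≤ t → (M t - μ • (1 : Matrix (Fin m) (Fin m) ℝ)).PosSemidef)
    (θ θ' : ℝ → Fin m → ℝ)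
    (hθ : ∀ t, HasDerivAt θ (θ' t) t)
    (hode : ∀ t : ℝ, θ' t =
        (-κ) • ((N t)ᵀ *ᵥ (signedPow (1 - α) (N t *ᵥ θ t) + signedPow (1 + α) (N t *ᵥ θ t)))
        - Γ • ((M t)ᵀ *ᵥ (signedPow (1 - α) (M t *ᵥ θ t) + signedPow (1 + α) (M t *ᵥ θ t)))) :
    ∀ t : ℝ, t₁ ≤ t →
      deriv (fun s => (1 / 2) * ∑ i, θ s i ^ 2) t
        ≤ -((2:ℝ) ^ ((2 - α) / 2) * Γ * μ ^ (2 - α)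
              * ((1 / 2) * ∑ i, θ t i ^ 2) ^ ((2 - α) / 2))
          - (2:ℝ) ^ ((2 + α) / 2) * (m : ℝ) ^ (-α / 2) * Γ * μ ^ (2 + α)
              * ((1 / 2) * ∑ i, θ t i ^ 2) ^ ((2 + α) / 2) := by
  intro t ht
  obtain ⟨hα0, hα1⟩ := hα
  have hd : HasDerivAt (fun s => (1 / 2) * ∑ i, θ s i ^ 2) (θ t ⬝ᵥ θ' t) t := by
    have h1 : HasDerivAt (fun s => (1 / 2) * ∑ i, θ s i ^ 2)
        ((1 / 2) * ∑ i, (2 : ℕ) * θ t i ^ (2 - 1) * θ' t i) t :=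
      (HasDerivAt.fun_sum fun i _ => ((hasDerivAt_pi.1 (hθ t)) i).fun_pow 2).const_mul _
    convert h1 using 1
    unfold dotProduct
    rw [Finset.mul_sum]
    exact Finset.sum_congr rfl fun i _ => by push_cast; ring
  rw [hd.deriv, hode t]
  have key : ∀ {d : ℕ} (A : Matrix (Fin d) (Fin m) ℝ) (w : Fin d → ℝ),
      θ t ⬝ᵥ (Aᵀ *ᵥ w) = (A *ᵥ θ t) ⬝ᵥ w := by
    intro d A w
    rw [Matrix.dotProduct_mulVec, Matrix.vecMul_transpose]
  rw [dotProduct_sub, dotProduct_smul, dotProduct_smul, key, key, dotProduct_add, dotProduct_add,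
    dot_signedPow _ (by linarith), dot_signedPow _ (by linarith), dot_signedPow _ (by linarith),
    dot_signedPow _ (by linarith)]
  have e1 : (1 + (1 - α)) / 2 = (2 - α) / 2 := by ring
  have e2 : (1 + (1 + α)) / 2 = (2 + α) / 2 := by ring
  rw [e1, e2, smul_eq_mul, smul_eq_mul]
  have hN1 : 0 ≤ ∑ i, ((N t *ᵥ θ t) i ^ 2) ^ ((2 - α) / 2) :=
    Finset.sum_nonneg fun i _ => by positivity
  have hN2 : 0 ≤ ∑ i, ((N t *ᵥ θ t) i ^ 2) ^ ((2 + α) / 2) :=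
    Finset.sum_nonneg fun i _ => by positivity
  have hN := mul_nonneg hκ.le (add_nonneg hN1 hN2)
  have hS := norm_lower (M t) μ hμ (hMμ t ht) (θ t)
  have hT : 0 ≤ ∑ i, θ t i ^ 2 := Finset.sum_nonneg fun i _ => sq_nonneg _
  have c1 := pow_conv μ _ (2 - α) hμ hT
  have c2 := pow_conv μ _ (2 + α) hμ hT
  have hμT : 0 ≤ μ ^ 2 * ∑ i, θ t i ^ 2 := by positivity
  have b1 : (μ ^ 2 * ∑ i, θ t i ^ 2) ^ ((2 - α) / 2)
      ≤ ∑ i, ((M t *ᵥ θ t) i ^ 2) ^ ((2 - α) / 2) :=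
    (Real.rpow_le_rpow hμT hS (by linarith)).trans
      (rpow_sum_le_sum_rpow' _ _ (fun i => sq_nonneg _) (by linarith) (by linarith))
  have b2 : (m : ℝ) ^ (-α / 2) * (μ ^ 2 * ∑ i, θ t i ^ 2) ^ ((2 + α) / 2)
      ≤ ∑ i, ((M t *ᵥ θ t) i ^ 2) ^ ((2 + α) / 2) := by
    have h := (Real.rpow_le_rpow hμT hS (by linarith : 0 ≤ (2 + α) / 2)).trans
      (Real.rpow_sum_le_const_mul_sum_rpow_of_nonneg Finset.univ
        (by linarith : 1 ≤ (2 + α) / 2) (fun i _ => sq_nonneg ((M t *ᵥ θ t) i)))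
    rw [Finset.card_univ, Fintype.card_fin] at h
    have hm0 : (0 : ℝ) < m := by exact_mod_cast hm
    have h' := mul_le_mul_of_nonneg_left h (Real.rpow_nonneg hm0.le (-α / 2))
    rw [← mul_assoc ((m : ℝ) ^ (-α / 2)) ((m : ℝ) ^ _) _, ← Real.rpow_add hm0] at h'
    have e : -α / 2 + ((2 + α) / 2 - 1) = 0 := by ring
    rwa [e, Real.rpow_zero, one_mul] at h'
  rw [← c1] at b1
  rw [← c2] at b2
  have hb := mul_le_mul_of_nonneg_left (add_le_add b1 b2) hΓ.le
  linarith
end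

section
/- For all real numbers x, w ∈ ℝ and every β > 0, the inequality x·|x+w|^{β}·sgn(x+w) ≥ 2^{−β}·|x|^{1+β} − (2 + 2·3^{β})·|w|^{1+β} holds. -/
/-- **Scalar robustness inequality for the signed power.**
For all `x, w ∈ ℝ` and every `β > 0`,
`x·⌈x+w⌋^β = x·|x+w|^β·sgn(x+w) ≥ 2^{−β}|x|^{1+β} − (2 + 2·3^β)|w|^{1+β}`. -/
theorem signed_power_robustness (x w β : ℝ) (hβ : 0 < β) :
    (2:ℝ) ^ (-β) * |x| ^ (1 + β) - (2 + 2 * (3:ℝ) ^ β) * |w| ^ (1 + β)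
      ≤ x * (|x + w| ^ β * Real.sign (x + w)) := by
  have key : ∀ y : ℝ, |y| ^ (1 + β) = |y| * |y| ^ β := fun y => by
    rw [Real.rpow_add_of_nonneg (abs_nonneg y) zero_le_one hβ.le, Real.rpow_one]
  have hw0 : 0 ≤ |w| ^ (1 + β) := by positivity
  have h3 : 0 < (3:ℝ) ^ β := by positivity
  rcases le_or_gt (2 * |w|) |x| with h | h
  · have hs : x * Real.sign (x + w) = |x| := by
      have h1 := neg_abs_le w
      have h2 := le_abs_self w
      have h4 := abs_nonneg w
      rcases lt_trichotomy x 0 with hx | hx | hx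
      · rw [abs_of_neg hx] at h ⊢
        rw [Real.sign_of_neg (by linarith)]; ring
      · simp [hx]
      · rw [abs_of_pos hx] at h ⊢
        rw [Real.sign_of_pos (by linarith)]; ring
    have ha : |x| / 2 ≤ |x + w| := by
      have := abs_sub_abs_le_abs_sub x (-w)
      rw [abs_neg, sub_neg_eq_add] at this
      linarith
    have hp : (|x| / 2) ^ β ≤ |x + w| ^ β :=
      Real.rpow_le_rpow (by positivity) ha hβ.le
    have e1 : (2:ℝ) ^ (-β) * |x| ^ (1 + β) = |x| * (|x| / 2) ^ β := by
      rw [key, Real.div_rpow (abs_nonneg x) (by norm_num), Real.rpow_neg (by norm_num)]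
      ring
    have e2 : x * (|x + w| ^ β * Real.sign (x + w)) = |x| * |x + w| ^ β := by
      rw [← hs]; ring
    rw [e1, e2]
    have := mul_le_mul_of_nonneg_left hp (abs_nonneg x)
    have : 0 ≤ (2 + 2 * (3:ℝ) ^ β) * |w| ^ (1 + β) := by positivity
    linarith
  · have b1 : (2:ℝ) ^ (-β) * |x| ^ (1 + β) ≤ 2 * |w| ^ (1 + β) := by
      have : |x| ^ (1 + β) ≤ (2 * |w|) ^ (1 + β) :=
        Real.rpow_le_rpow (abs_nonneg x) h.le (by linarith)
      calc (2:ℝ) ^ (-β) * |x| ^ (1 + β) ≤ (2:ℝ) ^ (-β) * (2 * |w|) ^ (1 + β) := by gcongr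
        _ = ((2:ℝ) ^ (-β) * (2:ℝ) ^ (1 + β)) * |w| ^ (1 + β) := by
          rw [Real.mul_rpow (by norm_num) (abs_nonneg w)]; ring
        _ = 2 * |w| ^ (1 + β) := by
          rw [← Real.rpow_add (by norm_num)]; norm_num
    have ha : |x + w| ≤ 3 * |w| := by
      have := abs_add_le x w
      linarith
    have hp : |x + w| ^ β ≤ 3 ^ β * |w| ^ β := by
      rw [← Real.mul_rpow (by norm_num) (abs_nonneg w)]
      exact Real.rpow_le_rpow (abs_nonneg _) ha hβ.le
    have hm : |x| * |x + w| ^ β ≤ (2 * |w|) * (3 ^ β * |w| ^ β) :=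
      mul_le_mul h.le hp (by positivity) (by positivity)
    have hsg : |Real.sign (x + w)| ≤ 1 := by
      rcases Real.sign_apply_eq (x + w) with h | h | h <;> rw [h] <;> norm_num
    have b2 : |x * (|x + w| ^ β * Real.sign (x + w))| ≤ |x| * |x + w| ^ β := by
      have hq : 0 ≤ |x + w| ^ β := by positivity
      rw [abs_mul, abs_mul, abs_of_nonneg hq]
      exact mul_le_mul_of_nonneg_left (mul_le_of_le_one_right hq hsg) (abs_nonneg x)
    have b3 := neg_abs_le (x * (|x + w| ^ β * Real.sign (x + w)))
    have e : (2 * |w|) * (3 ^ β * |w| ^ β) = 2 * 3 ^ β * |w| ^ (1 + β) := by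
      rw [key]; ring
    linarith
end
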